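/- Let S ⊆ [n]² be admissible, Ā ∈ M_S and b̄ ∈ ℝⁿ with ‖Ā‖_max ≤ 1 and ‖b̄‖_∞ ≤ 1, σ > 0, and let A ~ N_S(Ā, σ²Id) and b ~ N(b̄, σ²Id) be independent. Then for every β > 1, E( log_β(c(A,b)) ) ≤ log_β((1 + σ)/σ) + 2·log_β|S| + log_β n + 2.65/ln β, where c(A,b) = max_{k ∈ [n]} c_k(A,b) and c_k(A,b) is the componentwise condition number of the map (A,b) ↦ (A⁻¹b)_k at (A,b) (A is almost surely invertible). -/

import Mathlib

open MeasureTheory ProbabilityTheory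
open scoped ENNReal

/-- Componentwise "distance" `d(u,v) = ‖(u−v)/v‖_∞`, valued in `[0,∞]`:
the `i`-th component of the quotient is `|u i − v i|/|v i|` if `v i ≠ 0`,
`0` if `u i = v i = 0`, and `∞` otherwise. -/
noncomputable def cwDist {ι : Type*} (u v : ι → ℝ) : ℝ≥0∞ :=
  ⨆ i, if v i ≠ 0 then ENNReal.ofReal (|u i - v i| / |v i|)
       else if u i = v i then 0 else ⊤

/-- Componentwise condition number of `F : D ⊆ ℝ^ι → ℝ^κ` at `a`:
`c^F(a) = lim_{δ→0} sup { d(F x, F a)/d(x,a) : x ∈ D, d(x,a) ≤ δ, x ≠ a }`,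
the limit being an infimum since the sup is monotone in `δ`. -/
noncomputable def cwCond {ι κ : Type*} (D : Set (ι → ℝ)) (F : (ι → ℝ) → κ → ℝ)
    (a : ι → ℝ) : ℝ≥0∞ :=
  ⨅ δ ∈ Set.Ioi (0 : ℝ≥0∞),
    ⨆ x ∈ {x ∈ D | cwDist x a ≤ δ ∧ x ≠ a}, cwDist (F x) (F a) / cwDist x a

/-- A matrix viewed as a point of `ℝ^(n×n)`. -/
def matToFun {n : ℕ} (A : Matrix (Fin n) (Fin n) ℝ) : Fin n × Fin n → ℝ :=
  fun p => A p.1 p.2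

/-- A point of `ℝ^(n×n)` viewed as a matrix. -/
def funToMat {n : ℕ} (x : Fin n × Fin n → ℝ) : Matrix (Fin n) (Fin n) ℝ :=
  Matrix.of fun i j => x (i, j)

/-- The componentwise condition number `c^det(A)` of determinant computation at `A`. -/
noncomputable def cDet {n : ℕ} (A : Matrix (Fin n) (Fin n) ℝ) : ℝ≥0∞ :=
  cwCond Set.univ (fun x (_ : Unit) => (funToMat x).det) (matToFun A)

/-- The componentwise condition number `c†_{kl}(A)` of the map `A ↦ (A⁻¹)_{kl}` at `A`. -/
noncomputable def cInv {n : ℕ} (k l : Fin n) (A : Matrix (Fin n) (Fin n) ℝ) : ℝ≥0∞ :=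
  cwCond {x | IsUnit (funToMat x).det}
    (fun x (_ : Unit) => (funToMat x)⁻¹ k l) (matToFun A)

/-- `c†(A) = max_{k,l} c†_{kl}(A)`. -/
noncomputable def cInvMax {n : ℕ} (A : Matrix (Fin n) (Fin n) ℝ) : ℝ≥0∞ :=
  ⨆ k, ⨆ l, cInv k l A

/-- A pair (matrix, right-hand side) viewed as a point of `ℝ^(n×n+n)`. -/
def pairToFun {n : ℕ} (A : Matrix (Fin n) (Fin n) ℝ) (b : Fin n → ℝ) :
    (Fin n × Fin n) ⊕ Fin n → ℝ :=
  Sum.elim (fun p => A p.1 p.2) b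

def funToMat' {n : ℕ} (x : (Fin n × Fin n) ⊕ Fin n → ℝ) : Matrix (Fin n) (Fin n) ℝ :=
  Matrix.of fun i j => x (Sum.inl (i, j))

def funToVec {n : ℕ} (x : (Fin n × Fin n) ⊕ Fin n → ℝ) : Fin n → ℝ :=
  fun i => x (Sum.inr i)

/-- The componentwise condition number `c_k(A,b)` of the map `(A,b) ↦ (A⁻¹b)_k` at `(A,b)`. -/
noncomputable def cLin {n : ℕ} (k : Fin n) (A : Matrix (Fin n) (Fin n) ℝ)
    (b : Fin n → ℝ) : ℝ≥0∞ :=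
  cwCond {x | IsUnit (funToMat' x).det}
    (fun x (_ : Unit) => (Matrix.mulVec (funToMat' x)⁻¹ (funToVec x)) k) (pairToFun A b)

/-- `c(A,b) = max_k c_k(A,b)`. -/
noncomputable def cLinMax {n : ℕ} (A : Matrix (Fin n) (Fin n) ℝ) (b : Fin n → ℝ) : ℝ≥0∞ :=
  ⨆ k, cLin k A b

instance matrixMeasurableSpace {n : ℕ} : MeasurableSpace (Matrix (Fin n) (Fin n) ℝ) :=
  inferInstanceAs (MeasurableSpace (Fin n → Fin n → ℝ))

/-- The distribution `N_S(Ā, σ²Id)` of a random sparse matrix: the entries `a_{ij}` with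
`(i,j) ∈ S` are independent Gaussians `N(ā_{ij}, σ²)`, and `a_{ij} = 0` for `(i,j) ∉ S`. -/
noncomputable def sparseGaussian {n : ℕ} (S : Finset (Fin n × Fin n))
    (Abar : Matrix (Fin n) (Fin n) ℝ) (σ : ℝ) : Measure (Matrix (Fin n) (Fin n) ℝ) :=
  (Measure.pi fun p : S => gaussianReal (Abar p.1.1 p.1.2) ⟨σ ^ 2, sq_nonneg σ⟩).map
    fun g => Matrix.of fun i j => if h : (i, j) ∈ S then g ⟨(i, j), h⟩ else 0

/-- The distribution `N(b̄, σ²Id)` on `ℝⁿ`: independent Gaussian entries `N(b̄_i, σ²)`. -/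
noncomputable def vecGaussian {n : ℕ} (bbar : Fin n → ℝ) (σ : ℝ) : Measure (Fin n → ℝ) :=
  Measure.pi fun i => gaussianReal (bbar i) ⟨σ ^ 2, sq_nonneg σ⟩

/-- `S ⊆ [n]²` is admissible when `M_S` contains an invertible matrix. -/
def Admissible {n : ℕ} (S : Finset (Fin n × Fin n)) : Prop :=
  ∃ B : Matrix (Fin n) (Fin n) ℝ, (∀ i j, (i, j) ∉ S → B i j = 0) ∧ IsUnit B.det

/-!
First-order perturbation theory bounds `c_k(A, b)`, for `x = A⁻¹ b` with `x_k ≠ 0`, by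
`2 ∑ |(A⁻¹)_{ki} a_{ij} x_j / x_k|`, the sum running over `(i, j) ∈ S`. If `B` denotes `A` with
column `k ≠ j` replaced by `b`, then `(B⁻¹)_{ji} = (A⁻¹)_{ji} - (A⁻¹)_{ki} x_j / x_k`, so every
summand is at most a sum of terms `|a_{ij} (M⁻¹)_{ji}|` where `M` is `A`, or `A` with a column other
than `j` replaced by `b`. As a function of the single entry `y = a_{ij}`, such a term is zero or
`|y / (y - q)|` with `q` independent of `y`.

For a Gaussian `y` of mean at most `1` in absolute value and variance `σ²`, the event
`|y / (y - q)| > t` is an interval around `q` of length proportional to `|q| / t`, on which the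
density is `O((1 + σ) / (σ |q|))`; so the tail is `O((1 + σ) / (σ t))` uniformly in `q`, and moments
of order less than `1` are bounded. The subadditivity of `x ↦ x ^ (2 / 3)` carries the bound on the
`2 / 3`-th moment over to the sum of at most `n |S|` terms, uniformly in `b`, and Jensen's
inequality turns it into a bound on the expected logarithm.
-/

open scoped Topology

section LogRpow

lemma rpow_sum_le_sum_rpow {ι : Type*} (t : Finset ι) (f : ι → ℝ≥0∞) {s : ℝ} (hs₀ : 0 < s)
    (hs₁ : s ≤ 1) :
    (∑ i ∈ t, f i) ^ s ≤ ∑ i ∈ t, f i ^ s :=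
  Finset.le_sum_of_subadditive (· ^ s) (ENNReal.zero_rpow_of_pos hs₀).le
    (fun x y => ENNReal.rpow_add_le_add_rpow x y hs₀.le hs₁) t f

lemma ofReal_log_toReal_le (x : ℝ≥0∞) :
    ENNReal.ofReal (Real.log x.toReal) ≤ (ENNReal.log x).toENNReal := by
  induction x with
  | top => simp
  | coe x =>
    obtain rfl | hx := eq_zero_or_pos x
    · simp
    · rw [← ENNReal.ofReal_coe_nnreal, ENNReal.log_ofReal_of_pos (NNReal.coe_pos.2 hx),
        EReal.real_coe_toENNReal, ENNReal.toReal_ofReal x.coe_nonneg]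

/-- The tangent line of `log` at `M`, applied to `x ^ s`: integrating it is Jensen's inequality, and
`exp 1 ≤ M` makes it dominate the positive part of the logarithm as well. -/
lemma toENNReal_log_le {s M : ℝ} (hs : 0 < s) (hM : Real.exp 1 ≤ M) (x : ℝ≥0∞) :
    (ENNReal.log x).toENNReal
      ≤ ENNReal.ofReal s⁻¹ * ((ENNReal.ofReal M)⁻¹ * x ^ s + ENNReal.ofReal (Real.log M - 1)) := by
  have hM₀ : 0 < M := (Real.exp_pos 1).trans_le hM
  have hlogM : 1 ≤ Real.log M := (Real.le_log_iff_exp_le hM₀).2 hM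
  induction x with
  | top => simp [hs, ENNReal.top_rpow_of_pos, ENNReal.mul_top]
  | coe x =>
    obtain rfl | hx := eq_zero_or_pos x
    · simp
    have hx' : (0 : ℝ) < x := hx
    have htangent : Real.log (x ^ s / M) ≤ x ^ s / M - 1 :=
      Real.log_le_sub_one_of_pos (by positivity)
    rw [Real.log_div (by positivity) hM₀.ne', Real.log_rpow hx'] at htangent
    rw [← ENNReal.ofReal_coe_nnreal, ENNReal.log_ofReal_of_pos hx', EReal.real_coe_toENNReal,
      ENNReal.ofReal_rpow_of_pos hx', ← ENNReal.ofReal_inv_of_pos hM₀,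
      ← ENNReal.ofReal_mul (by positivity), ← ENNReal.ofReal_add (by positivity) (by linarith),
      ← ENNReal.ofReal_mul (by positivity)]
    refine ENNReal.ofReal_le_ofReal ?_
    rw [inv_mul_eq_div, inv_mul_eq_div, le_div_iff₀ hs]
    linarith

end LogRpow

section Integration

variable {ι : Type*} [Fintype ι] [DecidableEq ι] {X : ι → Type*} [∀ i, MeasurableSpace (X i)]

lemma ae_pi_of_forall_ae_update (μ : ∀ i, Measure (X i)) [∀ i, SigmaFinite (μ i)]
    {p : (∀ i, X i) → Prop} (hp : MeasurableSet {x | p x})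
    (hupdate : ∀ x i, p x → ∀ᵐ y ∂μ i, p (Function.update x i y)) {x₀ : ∀ i, X i} (hx₀ : p x₀) :
    ∀ᵐ x ∂Measure.pi μ, p x := by
  have hmeas : Measurable ({x | p x}ᶜ.indicator (1 : (∀ i, X i) → ℝ≥0∞)) :=
    measurable_one.indicator hp.compl
  have hmarginal : ∀ (s : Finset ι) (x : ∀ i, X i), p x →
      (∫⋯∫⁻_s, {x | p x}ᶜ.indicator 1 ∂μ) x = 0 := by
    intro s
    induction s using Finset.induction_on with
    | empty => intro x hx; simp [hx]
    | insert i s hi ih =>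
      intro x hx
      rw [lmarginal_insert _ hmeas hi]
      exact lintegral_eq_zero_of_ae_eq_zero ((hupdate x i hx).mono fun y hy => ih _ hy)
  have hnull := hmarginal Finset.univ x₀ hx₀
  rwa [← lintegral_eq_lmarginal_univ, lintegral_indicator_one hp.compl] at hnull

lemma lintegral_pi_le_of_forall_lintegral_update_le (μ : ∀ i, Measure (X i))
    [∀ i, IsProbabilityMeasure (μ i)] {f : (∀ i, X i) → ℝ≥0∞} (hf : Measurable f) (i : ι)
    {C : ℝ≥0∞} (hC : ∀ x, ∫⁻ y, f (Function.update x i y) ∂μ i ≤ C) :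
    ∫⁻ x, f x ∂Measure.pi μ ≤ C := by
  obtain ⟨x₀⟩ : Nonempty (∀ i, X i) := (Measure.pi μ).nonempty_of_neZero
  rw [lintegral_eq_lmarginal_univ x₀, lmarginal_erase' _ hf (Finset.mem_univ i)]
  calc _ ≤ (∫⋯∫⁻_Finset.univ.erase i, (fun _ => C) ∂μ) x₀ := lmarginal_mono hC x₀
    _ = C := by simp [lmarginal]

variable {Ω : Type*} [MeasurableSpace Ω] {μ : Measure Ω}

lemma integral_le_of_lintegral_ofReal_le {f : Ω → ℝ} {C : ℝ} (hC : 0 ≤ C)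
    (h : ∫⁻ ω, ENNReal.ofReal (f ω) ∂μ ≤ ENNReal.ofReal C) : ∫ ω, f ω ∂μ ≤ C := by
  by_cases hf : Integrable f μ
  · rw [integral_eq_lintegral_pos_part_sub_lintegral_neg_part hf]
    exact (sub_le_self _ ENNReal.toReal_nonneg).trans (ENNReal.toReal_le_of_le_ofReal hC h)
  · rwa [integral_undef hf]

lemma lintegral_prod_symm_le {Ω' : Type*} [MeasurableSpace Ω'] [SFinite μ] {ν : Measure Ω'}
    [SFinite ν] (f : Ω × Ω' → ℝ≥0∞) :
    ∫⁻ z, f z ∂μ.prod ν ≤ ∫⁻ y, ∫⁻ x, f (x, y) ∂μ ∂ν := by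
  rw [← Measure.prod_swap]
  exact (lintegral_map_le _ _).trans (lintegral_prod_le _)

lemma setLIntegral_Ioc_ofReal_rpow {s T : ℝ} (hs : 0 < s) (hT : 0 ≤ T) :
    ∫⁻ t in Set.Ioc 0 T, ENNReal.ofReal (t ^ (s - 1)) = ENNReal.ofReal (T ^ s / s) := by
  have hintegrable : IntegrableOn (fun t : ℝ => t ^ (s - 1)) (Set.Ioc 0 T) :=
    (intervalIntegrable_iff_integrableOn_Ioc_of_le hT).1
      (intervalIntegral.intervalIntegrable_rpow' (by linarith))
  rw [← ofReal_integral_eq_lintegral_ofReal hintegrable <|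
      (ae_restrict_mem measurableSet_Ioc).mono fun t ht => Real.rpow_nonneg ht.1.le _,
    ← intervalIntegral.integral_of_le hT, integral_rpow (Or.inl (by linarith)),
    sub_add_cancel, Real.zero_rpow hs.ne', sub_zero]

lemma setLIntegral_Ioi_ofReal_rpow {s T : ℝ} (hs : s < 1) (hT : 0 < T) :
    ∫⁻ t in Set.Ioi T, ENNReal.ofReal (t ^ (s - 2)) = ENNReal.ofReal (T ^ (s - 1) / (1 - s)) := by
  rw [← ofReal_integral_eq_lintegral_ofReal (integrableOn_Ioi_rpow_of_lt (by linarith) hT) <|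
      (ae_restrict_mem measurableSet_Ioi).mono fun t ht => Real.rpow_nonneg (hT.trans ht).le _,
    integral_Ioi_rpow_of_lt (by linarith) hT, show s - 2 + 1 = s - 1 by ring, ← neg_sub s 1,
    div_neg, neg_div]

lemma lintegral_rpow_le_of_meas_lt_le [IsProbabilityMeasure μ] {X : Ω → ℝ} {s T B : ℝ}
    (hX : 0 ≤ X) (hXm : Measurable X) (hs₀ : 0 < s) (hs₁ : s < 1) (hT : 0 < T) (hB : 0 ≤ B)
    (htail : ∀ t, T < t → μ {ω | t < X ω} ≤ ENNReal.ofReal (B / t)) :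
    ∫⁻ ω, ENNReal.ofReal (X ω ^ s) ∂μ
      ≤ ENNReal.ofReal (T ^ s + s / (1 - s) * B * T ^ (s - 1)) := by
  have hbulk : ∫⁻ t in Set.Ioc 0 T, μ {ω | t < X ω} * ENNReal.ofReal (t ^ (s - 1))
      ≤ ENNReal.ofReal (T ^ s / s) := by
    rw [← setLIntegral_Ioc_ofReal_rpow hs₀ hT.le]
    exact lintegral_mono fun t => mul_le_of_le_one_left zero_le prob_le_one
  have htail' : ∫⁻ t in Set.Ioi T, μ {ω | t < X ω} * ENNReal.ofReal (t ^ (s - 1))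
      ≤ ENNReal.ofReal B * ENNReal.ofReal (T ^ (s - 1) / (1 - s)) := by
    rw [← setLIntegral_Ioi_ofReal_rpow hs₁ hT, ← lintegral_const_mul' _ _ ENNReal.ofReal_ne_top]
    refine setLIntegral_mono' measurableSet_Ioi fun t ht => ?_
    have ht₀ : 0 < t := hT.trans ht
    have hpow : t ^ (s - 1) = t ^ (s - 2) * t := by
      rw [← Real.rpow_add_one ht₀.ne']; ring_nf
    calc _ ≤ ENNReal.ofReal (B / t) * ENNReal.ofReal (t ^ (s - 1)) := by
          gcongr; exact htail t ht
      _ = ENNReal.ofReal B * ENNReal.ofReal (t ^ (s - 2)) := by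
          rw [← ENNReal.ofReal_mul (by positivity), ← ENNReal.ofReal_mul hB, hpow]
          field_simp
  have h1s : 0 < 1 - s := by linarith
  rw [lintegral_rpow_eq_lintegral_meas_lt_mul _ (.of_forall hX) hXm.aemeasurable hs₀,
    ← Set.Ioc_union_Ioi_eq_Ioi hT.le,
    lintegral_union measurableSet_Ioi (Set.Ioc_disjoint_Ioi le_rfl)]
  calc _ ≤ ENNReal.ofReal s * (ENNReal.ofReal (T ^ s / s) +
        ENNReal.ofReal B * ENNReal.ofReal (T ^ (s - 1) / (1 - s))) := by gcongr
    _ = _ := by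
      rw [← ENNReal.ofReal_mul hB, ← ENNReal.ofReal_add (by positivity) (by positivity),
        ← ENNReal.ofReal_mul hs₀.le]
      congr 1
      field_simp

lemma lintegral_toENNReal_log_le [IsProbabilityMeasure μ] {f : Ω → ℝ≥0∞} {s M : ℝ} (hs : 0 < s)
    (hM : Real.exp 1 ≤ M) (hf : ∫⁻ ω, f ω ^ s ∂μ ≤ ENNReal.ofReal M) :
    ∫⁻ ω, (ENNReal.log (f ω)).toENNReal ∂μ ≤ ENNReal.ofReal (Real.log M / s) := by
  have hM₀ : 0 < M := (Real.exp_pos 1).trans_le hM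
  have hlogM : 1 ≤ Real.log M := (Real.le_log_iff_exp_le hM₀).2 hM
  have hM' : ENNReal.ofReal M ≠ 0 := (ENNReal.ofReal_pos.2 hM₀).ne'
  calc ∫⁻ ω, (ENNReal.log (f ω)).toENNReal ∂μ
      ≤ ∫⁻ ω, ENNReal.ofReal s⁻¹ *
          ((ENNReal.ofReal M)⁻¹ * f ω ^ s + ENNReal.ofReal (Real.log M - 1)) ∂μ :=
        lintegral_mono fun ω => toENNReal_log_le hs hM (f ω)
    _ = ENNReal.ofReal s⁻¹ *
          ((ENNReal.ofReal M)⁻¹ * ∫⁻ ω, f ω ^ s ∂μ + ENNReal.ofReal (Real.log M - 1)) := by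
        rw [lintegral_const_mul' _ _ ENNReal.ofReal_ne_top, lintegral_add_right _ measurable_const,
          lintegral_const_mul' _ _ (ENNReal.inv_ne_top.2 hM'), lintegral_const, measure_univ,
          mul_one]
    _ ≤ ENNReal.ofReal s⁻¹ *
          ((ENNReal.ofReal M)⁻¹ * ENNReal.ofReal M + ENNReal.ofReal (Real.log M - 1)) := by gcongr
    _ = ENNReal.ofReal (Real.log M / s) := by
        rw [ENNReal.inv_mul_cancel hM' ENNReal.ofReal_ne_top, ← ENNReal.ofReal_one,
          ← ENNReal.ofReal_add one_pos.le (by linarith), ← ENNReal.ofReal_mul (by positivity)]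
        congr 1; ring

end Integration

section GaussianQuotient

lemma mul_abs_sub_lt_of_lt_abs_div_sub {t a q : ℝ} (ht : 0 ≤ t) (h : t < |a / (a - q)|) :
    t * |a - q| < |a| := by
  have haq : a - q ≠ 0 := fun h₀ => by simp [h₀, ht.not_gt] at h
  rwa [abs_div, lt_div_iff₀ (abs_pos.2 haq)] at h

/-- The hypothesis describes an Apollonius disc of the points `0` and `q`. -/
lemma abs_sub_lt_of_mul_abs_sub_lt {t a q : ℝ} (ht : 1 < t) (h : t * |a - q| < |a|) :
    |a - q * t ^ 2 / (t ^ 2 - 1)| < |q| * t / (t ^ 2 - 1) := by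
  have ht' : 0 < t ^ 2 - 1 := by nlinarith
  have hsq : t ^ 2 * (a - q) ^ 2 < a ^ 2 := by
    rw [← sq_abs a, ← sq_abs (a - q), ← mul_pow]
    exact pow_lt_pow_left₀ h (by positivity) two_ne_zero
  have hcenter : a - q * t ^ 2 / (t ^ 2 - 1) = ((t ^ 2 - 1) * a - q * t ^ 2) / (t ^ 2 - 1) := by
    field_simp
  rw [hcenter, abs_div, abs_of_pos ht', div_lt_div_iff_of_pos_right ht']
  refine abs_lt_of_sq_lt_sq ?_ (by positivity)
  rw [mul_pow, sq_abs]
  nlinarith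

lemma le_abs_of_mul_abs_sub_lt {t a q : ℝ} (ht : 0 < t) (h : t * |a - q| < |a|) :
    |q| * t / (t + 1) ≤ |a| := by
  have htri : |q| ≤ |a| + |a - q| := by simpa using abs_sub a (a - q)
  rw [div_le_iff₀ (by positivity)]
  nlinarith

lemma withDensity_lt_abs_div_sub_le {f : ℝ → ℝ} {C : ℝ} (hf : ∀ x, |x| * f x ≤ C) (q : ℝ) {t : ℝ}
    (ht : 1 < t) :
    volume.withDensity (fun x => ENNReal.ofReal (f x)) {a | t < |a / (a - q)|}
      ≤ ENNReal.ofReal (2 * C / (t - 1)) := by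
  have hC : 0 ≤ C := by simpa using hf 0
  have ht₀ : 0 < t := one_pos.trans ht
  obtain rfl | hq := eq_or_ne q 0
  · have hempty : {a : ℝ | t < |a / (a - 0)|} = ∅ := by
      ext a
      obtain rfl | ha := eq_or_ne a 0 <;> simp [*, ht.le, ht₀.le]
    rw [hempty, measure_empty]
    exact zero_le
  set s := {a : ℝ | t < |a / (a - q)|}
  have hsm : MeasurableSet s := measurableSet_lt (by fun_prop) (by fun_prop)
  have hball : s ⊆ Metric.ball (q * t ^ 2 / (t ^ 2 - 1)) (|q| * t / (t ^ 2 - 1)) := fun a ha =>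
    abs_sub_lt_of_mul_abs_sub_lt ht (mul_abs_sub_lt_of_lt_abs_div_sub ht₀.le ha)
  have hlower : ∀ a ∈ s, |q| * t / (t + 1) ≤ |a| := fun a ha =>
    le_abs_of_mul_abs_sub_lt ht₀ (mul_abs_sub_lt_of_lt_abs_div_sub ht₀.le ha)
  have hdensity : ∀ a ∈ s, f a ≤ C / (|q| * t / (t + 1)) := fun a ha => by
    have ha₀ : 0 < |a| := lt_of_lt_of_le (by positivity) (hlower a ha)
    calc f a ≤ C / |a| := (le_div_iff₀' ha₀).2 (hf a)
      _ ≤ C / (|q| * t / (t + 1)) := by gcongr; exact hlower a ha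
  rw [withDensity_apply _ hsm]
  calc ∫⁻ a in s, ENNReal.ofReal (f a)
      ≤ ∫⁻ _ in s, ENNReal.ofReal (C / (|q| * t / (t + 1))) :=
        setLIntegral_mono' hsm fun a ha => ENNReal.ofReal_le_ofReal (hdensity a ha)
    _ = ENNReal.ofReal (C / (|q| * t / (t + 1))) * volume s := setLIntegral_const _ _
    _ ≤ ENNReal.ofReal (C / (|q| * t / (t + 1))) *
          ENNReal.ofReal (2 * (|q| * t / (t ^ 2 - 1))) := by
        rw [← Real.volume_ball]; gcongr
    _ = ENNReal.ofReal (2 * C / (t - 1)) := by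
        rw [← ENNReal.ofReal_mul (by positivity), show t ^ 2 - 1 = (t - 1) * (t + 1) by ring]
        have : t - 1 ≠ 0 := by linarith
        congr 1; field_simp

lemma abs_mul_exp_neg_sq_div_two_le (z : ℝ) : |z| * Real.exp (-z ^ 2 / 2) ≤ Real.exp (-1 / 2) := by
  have h : |z| ≤ Real.exp ((z ^ 2 - 1) / 2) := by
    nlinarith [Real.add_one_le_exp ((z ^ 2 - 1) / 2), sq_abs z, sq_nonneg (|z| - 1)]
  calc |z| * Real.exp (-z ^ 2 / 2) ≤ Real.exp ((z ^ 2 - 1) / 2) * Real.exp (-z ^ 2 / 2) := by gcongr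
    _ = Real.exp (-1 / 2) := by rw [← Real.exp_add]; ring_nf

lemma abs_mul_gaussianPDFReal_le (m : ℝ) {v : NNReal} (hv : v ≠ 0) (x : ℝ) :
    |x| * gaussianPDFReal m v x
      ≤ (√(2 * Real.pi))⁻¹ * (|m| / √(v : ℝ) + Real.exp (-1 / 2)) := by
  have hσ : 0 < √(v : ℝ) := Real.sqrt_pos.2 (NNReal.coe_pos.2 (pos_iff_ne_zero.2 hv))
  set σ := √(v : ℝ)
  have hvσ : (v : ℝ) = σ ^ 2 := (Real.sq_sqrt v.2).symm
  set z := (x - m) / σ with hz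
  have hxz : x = m + σ * z := by rw [hz]; field_simp; ring
  have hpdf : gaussianPDFReal m v x = (√(2 * Real.pi))⁻¹ * (Real.exp (-z ^ 2 / 2) / σ) := by
    rw [gaussianPDFReal, hvσ, Real.sqrt_mul (by positivity), Real.sqrt_sq hσ.le, hz]
    field_simp
  calc |x| * gaussianPDFReal m v x
      ≤ (|m| + σ * |z|) * ((√(2 * Real.pi))⁻¹ * (Real.exp (-z ^ 2 / 2) / σ)) := by
        rw [hpdf]
        gcongr
        calc |x| = |m + σ * z| := by rw [← hxz]
          _ ≤ |m| + σ * |z| := by simpa [abs_mul, abs_of_pos hσ] using abs_add_le m (σ * z)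
    _ = (√(2 * Real.pi))⁻¹ *
          (|m| / σ * Real.exp (-z ^ 2 / 2) + |z| * Real.exp (-z ^ 2 / 2)) := by
        field_simp
    _ ≤ (√(2 * Real.pi))⁻¹ * (|m| / σ * 1 + Real.exp (-1 / 2)) := by
        gcongr
        · exact Real.exp_le_one_iff.2 (by nlinarith [sq_nonneg z])
        · exact abs_mul_exp_neg_sq_div_two_le z
    _ = _ := by rw [mul_one]

lemma abs_mul_gaussianPDFReal_le_of_div_sqrt_le {m κ : ℝ} {v : NNReal} (hv : v ≠ 0)
    (hκ : |m| / √(v : ℝ) + 1 ≤ κ) (x : ℝ) :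
    |x| * gaussianPDFReal m v x ≤ 0.4 * (κ - 1 / 3) := by
  have hpi : (√(2 * Real.pi))⁻¹ ≤ 0.4 := by
    rw [inv_le_comm₀ (by positivity) (by norm_num)]
    exact Real.le_sqrt_of_sq_le (by nlinarith [Real.pi_gt_d2])
  have hexp : Real.exp (-1 / 2) ≤ 2 / 3 := by
    rw [neg_div, Real.exp_neg, inv_le_comm₀ (Real.exp_pos _) (by norm_num)]
    linarith [Real.add_one_le_exp (1 / 2 : ℝ)]
  calc |x| * gaussianPDFReal m v x
      ≤ (√(2 * Real.pi))⁻¹ * (|m| / √(v : ℝ) + Real.exp (-1 / 2)) :=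
        abs_mul_gaussianPDFReal_le m hv x
    _ ≤ 0.4 * (κ - 1 / 3) := by gcongr; linarith

lemma gaussianReal_lt_abs_div_sub_le {m κ t : ℝ} {v : NNReal} (hv : v ≠ 0)
    (hκ : |m| / √(v : ℝ) + 1 ≤ κ) (q : ℝ) (ht : 3 * κ < t) :
    gaussianReal m v {a | t < |a / (a - q)|} ≤ ENNReal.ofReal (0.8 * κ / t) := by
  have hκ₁ : 1 ≤ κ := le_trans (le_add_of_nonneg_left (by positivity)) hκ
  rw [gaussianReal_of_var_ne_zero m hv]
  refine (withDensity_lt_abs_div_sub_le (abs_mul_gaussianPDFReal_le_of_div_sqrt_le hv hκ) q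
    (by linarith)).trans (ENNReal.ofReal_le_ofReal ?_)
  -- `(κ - 1 / 3) / (t - 1) ≤ κ / t` amounts to `3 * κ ≤ t`, whence the cutoff.
  rw [div_le_div_iff₀ (by linarith) (by linarith)]
  nlinarith

lemma lintegral_enorm_div_sub_rpow_gaussianReal_le {m κ : ℝ} {v : NNReal} (hv : v ≠ 0)
    (hκ : |m| / √(v : ℝ) + 1 ≤ κ) (q : ℝ) :
    ∫⁻ a, ‖a / (a - q)‖ₑ ^ (2 / 3 : ℝ) ∂gaussianReal m v
      ≤ ENNReal.ofReal (23 / 15 * (3 * κ) ^ (2 / 3 : ℝ)) := by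
  have hκ₁ : 1 ≤ κ := le_trans (le_add_of_nonneg_left (by positivity)) hκ
  calc ∫⁻ a, ‖a / (a - q)‖ₑ ^ (2 / 3 : ℝ) ∂gaussianReal m v
      = ∫⁻ a, ENNReal.ofReal (|a / (a - q)| ^ (2 / 3 : ℝ)) ∂gaussianReal m v := by
        refine lintegral_congr fun a => ?_
        rw [Real.enorm_eq_ofReal_abs, ENNReal.ofReal_rpow_of_nonneg (abs_nonneg _) (by norm_num)]
    _ ≤ ENNReal.ofReal ((3 * κ) ^ (2 / 3 : ℝ) +
          2 / 3 / (1 - 2 / 3) * (0.8 * κ) * (3 * κ) ^ (2 / 3 - 1 : ℝ)) :=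
        lintegral_rpow_le_of_meas_lt_le (fun _ => abs_nonneg _) (by fun_prop) (by norm_num)
          (by norm_num) (by positivity) (by positivity)
          fun t ht => gaussianReal_lt_abs_div_sub_le hv hκ q ht
    _ = ENNReal.ofReal (23 / 15 * (3 * κ) ^ (2 / 3 : ℝ)) := by
        rw [Real.rpow_sub_one (by positivity)]
        congr 1; field_simp; ring

end GaussianQuotient

section ConditionNumber

variable {ι κ : Type*}

lemma cwDist_le_ofReal_iff {u v : ι → ℝ} {η : ℝ} (hη : 0 ≤ η) :
    cwDist u v ≤ ENNReal.ofReal η ↔ ∀ i, |u i - v i| ≤ η * |v i| := by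
  refine iSup_le_iff.trans (forall_congr' fun i => ?_)
  by_cases hv : v i = 0
  · by_cases hu : u i = 0 <;> simp [hv, hu]
  · rw [if_pos hv, ENNReal.ofReal_le_ofReal_iff hη, div_le_iff₀ (abs_pos.2 hv)]

lemma exists_forall_cwDist_le_mem [Finite ι] {a : ι → ℝ} {U : Set (ι → ℝ)} (hU : U ∈ 𝓝 a) :
    ∃ δ > 0, ∀ x, cwDist x a ≤ ENNReal.ofReal δ → x ∈ U := by
  cases nonempty_fintype ι
  obtain ⟨r, hr, hball⟩ := Metric.mem_nhds_iff.1 hU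
  have hδ : 0 < r / 2 / (‖a‖ + 1) := by positivity
  refine ⟨_, hδ, fun x hx => hball ((dist_pi_lt_iff hr).2 fun i => ?_)⟩
  calc dist (x i) (a i) ≤ r / 2 / (‖a‖ + 1) * |a i| := (cwDist_le_ofReal_iff hδ.le).1 hx i
    _ ≤ r / 2 / (‖a‖ + 1) * (‖a‖ + 1) := by
      gcongr
      exact (norm_le_pi_norm a i).trans (le_add_of_nonneg_right zero_le_one)
    _ < r := by rw [div_mul_cancel₀ _ (by positivity)]; linarith

lemma cwCond_le_ofReal [Finite ι] {D : Set (ι → ℝ)} {F : (ι → ℝ) → κ → ℝ} {a : ι → ℝ}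
    {L : (ι → ℝ) → ℝ} (hL : ContinuousAt L a) (hLa : 0 ≤ L a)
    (hF : ∀ᶠ x in 𝓝 a, x ∈ D → ∀ η ≥ 0, (∀ i, |x i - a i| ≤ η * |a i|) →
      ∀ j, |F x j - F a j| ≤ L x * η * |F a j|) :
    cwCond D F a ≤ ENNReal.ofReal (L a) := by
  refine ENNReal.le_of_forall_pos_le_add fun ε hε _ => ?_
  have hε' : L a < L a + ε := lt_add_of_pos_right _ hε
  obtain ⟨δ, hδ, hmem⟩ := exists_forall_cwDist_le_mem (hF.and (hL.eventually_lt_const hε'))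
  refine iInf₂_le_of_le (ENNReal.ofReal δ) (ENNReal.ofReal_pos.2 hδ) (iSup₂_le fun x hx => ?_)
  obtain ⟨hxD, hxδ : cwDist x a ≤ ENNReal.ofReal δ, -⟩ := hx
  obtain ⟨hFx, hLx⟩ := hmem x hxδ
  set η := (cwDist x a).toReal
  have hη : 0 ≤ η := ENNReal.toReal_nonneg
  have hdist : cwDist x a = ENNReal.ofReal η :=
    (ENNReal.ofReal_toReal (ne_top_of_le_ne_top ENNReal.ofReal_ne_top hxδ)).symm
  have hLε : 0 ≤ L a + ε := hLa.trans hε'.le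
  refine ENNReal.div_le_of_le_mul ?_
  rw [hdist, ← ENNReal.ofReal_coe_nnreal, ← ENNReal.ofReal_add hLa ε.coe_nonneg,
    ← ENNReal.ofReal_mul hLε, cwDist_le_ofReal_iff (mul_nonneg hLε hη)]
  exact fun j => (hFx hxD η hη ((cwDist_le_ofReal_iff hη).1 hdist.le) j).trans (by gcongr)

end ConditionNumber

section LinearSystem

open Matrix

variable {m K : Type*} [Fintype m] [DecidableEq m] [Field K]

lemma det_updateCol_eq_det_mul_inv_mulVec {A : Matrix m m K} (hA : IsUnit A.det)
    (b : m → K) (k : m) : (A.updateCol k b).det = A.det * (A⁻¹ *ᵥ b) k := by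
  rw [← cramer_apply, ← det_smul_inv_mulVec_eq_cramer A b hA, Pi.smul_apply, smul_eq_mul]

lemma inv_mulVec_apply_eq_zero {A : Matrix m m K} {b : m → K} {k : m}
    (h : (A.updateCol k b).det = 0) : (A⁻¹ *ᵥ b) k = 0 := by
  by_cases hA : IsUnit A.det
  · rw [det_updateCol_eq_det_mul_inv_mulVec hA] at h
    exact (mul_eq_zero.1 h).resolve_left hA.ne_zero
  · simp [nonsing_inv_apply_not_isUnit A hA]

lemma inv_updateCol_apply {A : Matrix m m K} {b : m → K} {j k : m} (hA : IsUnit A.det)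
    (hk : (A⁻¹ *ᵥ b) k ≠ 0) (hjk : j ≠ k) (i : m) :
    (A.updateCol k b)⁻¹ j i = A⁻¹ j i - (A⁻¹ *ᵥ b) j / (A⁻¹ *ᵥ b) k * A⁻¹ k i := by
  set x := A⁻¹ *ᵥ b
  have hB : IsUnit (A.updateCol k b).det := by
    rw [det_updateCol_eq_det_mul_inv_mulVec hA]
    exact hA.mul hk.isUnit
  have hinvB : A⁻¹ * A.updateCol k b = (1 : Matrix m m K).updateCol k x := by
    rw [mul_updateCol, nonsing_inv_mul A hA]
  have hrow : (A⁻¹ j - (x j / x k) • A⁻¹ k) ᵥ* A.updateCol k b = Pi.single j 1 := by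
    have happly : ∀ a, A⁻¹ a ᵥ* A.updateCol k b
        = (1 : Matrix m m K).updateCol k x a := fun a => congrFun hinvB a
    ext l
    rw [sub_vecMul, smul_vecMul, happly, happly]
    obtain rfl | hl := eq_or_ne l k
    · simp [hk, hjk.symm]
    · simp [hl, one_apply, Pi.single_apply, hl.symm, eq_comm]
  have hrow' := congrArg (· ᵥ* (A.updateCol k b)⁻¹) hrow
  simp only [vecMul_vecMul, mul_nonsing_inv _ hB, vecMul_one, single_one_vecMul] at hrow'
  exact (congrFun hrow' i).symm

lemma abs_inv_mulVec_sub_inv_mulVec_le {A A' : Matrix m m ℝ} {b b' : m → ℝ}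
    (hA : IsUnit A.det) (hA' : IsUnit A'.det) {η : ℝ}
    (hAA' : ∀ i j, |A' i j - A i j| ≤ η * |A i j|) (hbb' : ∀ i, |b' i - b i| ≤ η * |b i|)
    (hη : 0 ≤ η) (k : m) :
    |(A'⁻¹ *ᵥ b') k - (A⁻¹ *ᵥ b) k|
      ≤ η * ∑ i, ∑ j, |A⁻¹ k i * A i j| * (|(A⁻¹ *ᵥ b) j| + |(A'⁻¹ *ᵥ b') j|) := by
  set x := A⁻¹ *ᵥ b with hx
  set x' := A'⁻¹ *ᵥ b' with hx'
  have hAx : A *ᵥ x = b := by rw [hx, mulVec_mulVec, mul_nonsing_inv A hA, one_mulVec]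
  have hAx' : A' *ᵥ x' = b' := by rw [hx', mulVec_mulVec, mul_nonsing_inv A' hA', one_mulVec]
  have hresolvent : x' - x = A⁻¹ *ᵥ ((b' - b) - (A' - A) *ᵥ x') := by
    have hres : b' - b - (A' - A) *ᵥ x' = A *ᵥ (x' - x) := by
      rw [sub_mulVec, mulVec_sub, hAx, hAx']; abel
    rw [hres, mulVec_mulVec, nonsing_inv_mul A hA, one_mulVec]
  have hb : ∀ i, |b i| ≤ ∑ j, |A i j| * |x j| := fun i => by
    calc |b i| = |∑ j, A i j * x j| := by rw [← hAx]; rfl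
      _ ≤ ∑ j, |A i j * x j| := Finset.abs_sum_le_sum_abs _ _
      _ = ∑ j, |A i j| * |x j| := by simp only [abs_mul]
  have hAx'_sub : ∀ i, |((A' - A) *ᵥ x') i| ≤ η * ∑ j, |A i j| * |x' j| := fun i => by
    calc |∑ j, (A' - A) i j * x' j| ≤ ∑ j, |(A' - A) i j * x' j| := Finset.abs_sum_le_sum_abs _ _
      _ ≤ ∑ j, η * |A i j| * |x' j| := by simp only [abs_mul]; gcongr with j; exact hAA' i j
      _ = η * ∑ j, |A i j| * |x' j| := by simp only [Finset.mul_sum, mul_assoc]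
  calc |x' k - x k| = |∑ i, A⁻¹ k i * ((b' - b) i - ((A' - A) *ᵥ x') i)| := by
        rw [← Pi.sub_apply, hresolvent]; rfl
    _ ≤ ∑ i, |A⁻¹ k i * ((b' - b) i - ((A' - A) *ᵥ x') i)| := Finset.abs_sum_le_sum_abs _ _
    _ ≤ ∑ i, |A⁻¹ k i| * (η * (∑ j, |A i j| * |x j|) + η * ∑ j, |A i j| * |x' j|) := by
        simp only [abs_mul]
        gcongr with i
        exact (abs_sub _ _).trans (add_le_add ((hbb' i).trans (by gcongr; exact hb i)) (hAx'_sub i))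
    _ = η * ∑ i, ∑ j, |A⁻¹ k i * A i j| * (|x j| + |x' j|) := by
        simp only [Finset.mul_sum, ← Finset.sum_add_distrib, abs_mul]
        exact Finset.sum_congr rfl fun i _ => Finset.sum_congr rfl fun j _ => by ring

variable {n : ℕ}

lemma continuousAt_inv_mulVec {p : (Fin n × Fin n) ⊕ Fin n → ℝ} (hp : IsUnit (funToMat' p).det)
    (j : Fin n) : ContinuousAt (fun x => ((funToMat' x)⁻¹ *ᵥ funToVec x) j) p := by
  have hmat : Continuous (funToMat' (n := n)) :=
    continuous_matrix fun _ _ => continuous_apply _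
  have hvec : Continuous (funToVec (n := n)) := continuous_pi fun _ => continuous_apply _
  simp only [inv_def, Ring.inverse_eq_inv', smul_mulVec, Pi.smul_apply]
  exact (hmat.matrix_det.continuousAt.inv₀ hp.ne_zero).smul
    ((continuous_apply j).comp (hmat.matrix_adjugate.matrix_mulVec hvec)).continuousAt

lemma cLin_le {A : Matrix (Fin n) (Fin n) ℝ} {b : Fin n → ℝ} {k : Fin n} (hA : IsUnit A.det)
    (hk : (A⁻¹ *ᵥ b) k ≠ 0) :
    cLin k A b ≤ ENNReal.ofReal
      (2 * ∑ i, ∑ j, |A⁻¹ k i * A i j * ((A⁻¹ *ᵥ b) j / (A⁻¹ *ᵥ b) k)|) := by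
  have hk' : 0 < |(A⁻¹ *ᵥ b) k| := abs_pos.2 hk
  set L : ((Fin n × Fin n) ⊕ Fin n → ℝ) → ℝ := fun p =>
    (∑ i, ∑ j, |A⁻¹ k i * A i j| * (|(A⁻¹ *ᵥ b) j| + |((funToMat' p)⁻¹ *ᵥ funToVec p) j|)) /
      |(A⁻¹ *ᵥ b) k|
  have hL : ContinuousAt L (pairToFun A b) := by
    refine ContinuousAt.div_const ?_ _
    refine tendsto_finsetSum _ fun i _ => tendsto_finsetSum _ fun j _ => ?_
    exact ((continuousAt_inv_mulVec (p := pairToFun A b) hA j).abs.const_add _).const_mul _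
  have hLa : L (pairToFun A b)
      = 2 * ∑ i, ∑ j, |A⁻¹ k i * A i j * ((A⁻¹ *ᵥ b) j / (A⁻¹ *ᵥ b) k)| := by
    change (∑ i, ∑ j, |A⁻¹ k i * A i j| * (|(A⁻¹ *ᵥ b) j| + |(A⁻¹ *ᵥ b) j|)) / |(A⁻¹ *ᵥ b) k| = _
    simp only [Finset.sum_div, Finset.mul_sum, abs_mul, abs_div]
    exact Finset.sum_congr rfl fun i _ => Finset.sum_congr rfl fun j _ => by ring
  rw [← hLa]
  refine cwCond_le_ofReal hL (hLa ▸ by positivity) (.of_forall fun p hp η hη hpη _ => ?_)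
  change |_ - (A⁻¹ *ᵥ b) k| ≤ _ * |(A⁻¹ *ᵥ b) k|
  rw [mul_right_comm, div_mul_cancel₀ _ hk'.ne', mul_comm]
  exact abs_inv_mulVec_sub_inv_mulVec_le hA hp (fun i j => hpη (.inl (i, j)))
    (fun i => hpη (.inr i)) hη k

end LinearSystem

section EntryUpdate

open Matrix

variable {m R : Type*} [DecidableEq m]

/-- The matrix `M` with its `(i, j)` entry replaced by `y`; resampling one entry of a random matrix
amounts to varying `y`. -/
def setEntry (M : Matrix m m R) (i j : m) (y : R) : Matrix m m R :=
  M.updateRow i (Function.update (M i) j y)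

lemma setEntry_apply (M : Matrix m m R) (i j : m) (y : R) (i' j' : m) :
    setEntry M i j y i' j' = if i' = i ∧ j' = j then y else M i' j' := by
  obtain rfl | hi := eq_or_ne i' i <;> simp [setEntry, *, Function.update_apply]

lemma setEntry_self (M : Matrix m m R) (i j : m) : setEntry M i j (M i j) = M := by
  simp [setEntry]

lemma updateCol_setEntry_self (A : Matrix m m R) (b : m → R) (i j : m) (y : R) :
    (setEntry A i j y).updateCol j b = A.updateCol j b := by
  ext i' j'
  simp only [updateCol_apply, setEntry_apply]
  grind

lemma updateCol_setEntry_of_ne (A : Matrix m m R) (b : m → R) {i j l : m} (hl : l ≠ j) (y : R) :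
    (setEntry A i j y).updateCol l b = setEntry (A.updateCol l b) i j y := by
  ext i' j'
  simp only [updateCol_apply, setEntry_apply]
  grind

/-- The matrix `A` if `l = j`, and otherwise `A` with its column `l` replaced by `b`. The entries
`(j, i)` of the inverses of these matrices control the condition number of `A⁻¹ b`; keeping column
`j` of `A` intact makes each of them a Möbius function of the entry `A i j`. -/
def cramerMatrix (A : Matrix m m R) (b : m → R) (j l : m) : Matrix m m R :=
  if l = j then A else A.updateCol l b

lemma cramerMatrix_setEntry (A : Matrix m m R) (b : m → R) (i j l : m) (y : R) :
    cramerMatrix (setEntry A i j y) b j l = setEntry (cramerMatrix A b j l) i j y := by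
  unfold cramerMatrix
  split_ifs with hl
  · rfl
  · exact updateCol_setEntry_of_ne A b hl y

variable [Fintype m]

lemma adjugate_setEntry [CommRing R] (M : Matrix m m R) (i j : m) (y : R) :
    (setEntry M i j y).adjugate j i = M.adjugate j i := by
  rw [adjugate_apply, adjugate_apply, setEntry, updateRow_idem]

lemma det_setEntry [CommRing R] (M : Matrix m m R) (i j : m) (y : R) :
    (setEntry M i j y).det = (setEntry M i j 0).det + y * M.adjugate j i := by
  have hrow : Function.update (M i) j y = Function.update (M i) j 0 + y • Pi.single j 1 := by
    ext l
    obtain rfl | hl := eq_or_ne l j <;> simp [*]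
  rw [setEntry, hrow, det_updateRow_add, det_updateRow_smul, ← adjugate_apply, setEntry]

lemma ae_det_setEntry_ne_zero (μ : Measure ℝ) [NullSingletonClass μ] {M : Matrix m m ℝ}
    (hM : M.det ≠ 0) (i j : m) : ∀ᵐ y ∂μ, (setEntry M i j y).det ≠ 0 := by
  have hzeros : {y | (setEntry M i j y).det = 0}.Subsingleton := by
    intro y hy z hz
    rw [Set.mem_ofPred, det_setEntry] at hy hz
    rw [← setEntry_self M i j, det_setEntry] at hM
    have hadj : M.adjugate j i ≠ 0 := fun h => by simp_all
    exact mul_right_cancel₀ hadj (by linear_combination hy - hz)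
  simpa [ae_iff] using hzeros.measure_zero μ

lemma exists_enorm_mul_inv_setEntry_le (M : Matrix m m ℝ) (i j : m) :
    ∃ q : ℝ, ∀ y, ‖y * (setEntry M i j y)⁻¹ j i‖ₑ ≤ ‖y / (y - q)‖ₑ := by
  have hinv : ∀ y, (setEntry M i j y)⁻¹ j i
      = ((setEntry M i j 0).det + y * M.adjugate j i)⁻¹ * M.adjugate j i := fun y => by
    rw [inv_def, Matrix.smul_apply, adjugate_setEntry, det_setEntry, Ring.inverse_eq_inv',
      smul_eq_mul]
  obtain hadj | hadj := eq_or_ne (M.adjugate j i) 0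
  · exact ⟨0, fun y => by simp [hinv, hadj]⟩
  refine ⟨-(setEntry M i j 0).det / M.adjugate j i, fun y => le_of_eq ?_⟩
  have hfactor : (setEntry M i j 0).det + y * M.adjugate j i
      = (y - -(setEntry M i j 0).det / M.adjugate j i) * M.adjugate j i := by
    field_simp; ring
  rw [hinv, hfactor, mul_inv, inv_mul_cancel_right₀ hadj, div_eq_mul_inv y]

lemma enorm_inv_mul_mul_div_le {A : Matrix m m ℝ} {b : m → ℝ} {k : m}
    (hA : IsUnit A.det) (hk : (A⁻¹ *ᵥ b) k ≠ 0) (i j : m) :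
    ‖A⁻¹ k i * A i j * ((A⁻¹ *ᵥ b) j / (A⁻¹ *ᵥ b) k)‖ₑ
      ≤ ∑ l, ‖A i j * (cramerMatrix A b j l)⁻¹ j i‖ₑ := by
  obtain rfl | hjk := eq_or_ne j k
  · rw [div_self hk, mul_one, mul_comm]
    calc ‖A i j * A⁻¹ j i‖ₑ = ‖A i j * (cramerMatrix A b j j)⁻¹ j i‖ₑ := by simp [cramerMatrix]
      _ ≤ _ := Finset.single_le_sum (f := fun l => ‖A i j * (cramerMatrix A b j l)⁻¹ j i‖ₑ)
          (fun _ _ => zero_le) (Finset.mem_univ j)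
  · have hdiff : A⁻¹ k i * A i j * ((A⁻¹ *ᵥ b) j / (A⁻¹ *ᵥ b) k)
        = A i j * (cramerMatrix A b j j)⁻¹ j i - A i j * (cramerMatrix A b j k)⁻¹ j i := by
      simp only [cramerMatrix, if_true, if_neg hjk.symm, inv_updateCol_apply hA hk hjk]
      ring
    calc _ ≤ ‖A i j * (cramerMatrix A b j j)⁻¹ j i‖ₑ + ‖A i j * (cramerMatrix A b j k)⁻¹ j i‖ₑ := by
          rw [hdiff]; exact enorm_sub_le
      _ = ∑ l ∈ {j, k}, ‖A i j * (cramerMatrix A b j l)⁻¹ j i‖ₑ := by rw [Finset.sum_pair hjk]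
      _ ≤ _ := Finset.sum_le_sum_of_subset (Finset.subset_univ _)

end EntryUpdate

section SparseMatrix

open Matrix

variable {n : ℕ} {S : Finset (Fin n × Fin n)}

/-- The element of `M_S` with prescribed entries at the positions in `S`. -/
def sparseMatrix (S : Finset (Fin n × Fin n)) (g : S → ℝ) : Matrix (Fin n) (Fin n) ℝ :=
  Matrix.of fun i j => if h : (i, j) ∈ S then g ⟨(i, j), h⟩ else 0

lemma sparseMatrix_apply_coe (g : S → ℝ) (p : S) : sparseMatrix S g p.1.1 p.1.2 = g p := by
  simp [sparseMatrix]

lemma sparseMatrix_apply_of_notMem (g : S → ℝ) {i j : Fin n} (h : (i, j) ∉ S) :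
    sparseMatrix S g i j = 0 := by
  simp [sparseMatrix, h]

lemma sparseMatrix_restrict {A : Matrix (Fin n) (Fin n) ℝ} (hA : ∀ i j, (i, j) ∉ S → A i j = 0) :
    sparseMatrix S (fun p => A p.1.1 p.1.2) = A := by
  ext i j
  by_cases h : (i, j) ∈ S <;> simp [sparseMatrix, h, hA]

lemma sparseMatrix_update (g : S → ℝ) (p : S) (y : ℝ) :
    sparseMatrix S (Function.update g p y) = setEntry (sparseMatrix S g) p.1.1 p.1.2 y := by
  ext i j
  rw [setEntry_apply]
  by_cases hij : (i, j) ∈ S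
  · simp [sparseMatrix, hij, Function.update_apply, Subtype.ext_iff, Prod.ext_iff]
  · have hp : ¬ (i = p.1.1 ∧ j = p.1.2) := by
      rintro ⟨rfl, rfl⟩
      exact hij p.2
    simp [sparseMatrix, hij, hp]

lemma continuous_sparseMatrix : Continuous (sparseMatrix S) :=
  continuous_matrix fun i j => by
    by_cases h : (i, j) ∈ S <;> simp only [sparseMatrix, h, of_apply, dite_true, dite_false] <;>
      fun_prop

lemma card_le_card_of_admissible (hS : Admissible S) : n ≤ S.card := by
  obtain ⟨B, hB, hdet⟩ := hS
  have hrows : S.image Prod.fst = Finset.univ := Finset.eq_univ_of_forall fun i => by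
    by_contra hi
    refine hdet.ne_zero (det_eq_zero_of_row_eq_zero i fun j => hB i j fun hij => hi ?_)
    exact Finset.mem_image_of_mem Prod.fst hij
  calc n = (S.image Prod.fst).card := by rw [hrows, Finset.card_univ, Fintype.card_fin]
    _ ≤ S.card := Finset.card_image_le

lemma det_updateCol_mul_eq_zero {b : Fin n → ℝ} {k : Fin n}
    (h : ∀ g : S → ℝ, ((sparseMatrix S g).updateCol k b).det = 0) {r : Fin n → ℝ}
    (hr : ∀ i, r i ≠ 0) {A : Matrix (Fin n) (Fin n) ℝ} (hA : ∀ i j, (i, j) ∉ S → A i j = 0) :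
    (A.updateCol k (r * b)).det = 0 := by
  have hscale : A.updateCol k (r * b) = Matrix.of fun i j => r i *
      ((Matrix.of fun i j => (r i)⁻¹ * A i j).updateCol k b) i j := by
    ext i j
    obtain rfl | hj := eq_or_ne j k <;> simp [*]
  rw [hscale, det_mul_column, ← sparseMatrix_restrict (S := S) (A := Matrix.of _), h, mul_zero]
  exact fun i j hij => by simp [hA i j hij]

/-- If `(A⁻¹ b)_k` vanishes identically on `M_S`, it also vanishes for every componentwise small
perturbation of `b`, since the ratio of the two right-hand sides can be absorbed by scaling rows. -/
lemma cLin_sparseMatrix_eq_zero {b : Fin n → ℝ} {k : Fin n}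
    (h : ∀ g : S → ℝ, ((sparseMatrix S g).updateCol k b).det = 0) (g : S → ℝ) :
    cLin k (sparseMatrix S g) b = 0 := by
  have hb : ∀ᶠ x in 𝓝 (pairToFun (sparseMatrix S g) b), ∀ i, b i ≠ 0 → funToVec x i ≠ 0 :=
    Filter.eventually_all.2 fun i => Filter.eventually_imp_distrib_left.2 fun hi =>
      (continuous_apply (Sum.inr i)).continuousAt.eventually_ne hi
  have hle := cwCond_le_ofReal (D := {x | IsUnit (funToMat' x).det})
    (F := fun x (_ : Unit) => ((funToMat' x)⁻¹ *ᵥ funToVec x) k)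
    (L := 0) continuousAt_const le_rfl (hb.mono fun x hx _ η _ hxη _ => ?_)
  · simpa [cLin] using hle
  have hbase : ((sparseMatrix S g)⁻¹ *ᵥ b) k = 0 := inv_mulVec_apply_eq_zero (h g)
  have hsupp : ∀ i j, (i, j) ∉ S → funToMat' x i j = 0 := fun i j hij => by
    have hxij := hxη (.inl (i, j))
    simp only [pairToFun, Sum.elim_inl, sparseMatrix_apply_of_notMem g hij] at hxij
    simpa [funToMat'] using hxij
  set r : Fin n → ℝ := fun i => if b i = 0 then 1 else funToVec x i / b i
  have hr : ∀ i, r i ≠ 0 := fun i => by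
    by_cases hi : b i = 0 <;> simp [r, hi, hx]
  have hrb : funToVec x = r * b := by
    ext i
    by_cases hi : b i = 0
    · have hxi := hxη (.inr i)
      simp only [pairToFun, Sum.elim_inr, hi] at hxi
      simpa [hi, funToVec] using hxi
    · simp [r, hi]
  have hx₀ : ((funToMat' x)⁻¹ *ᵥ funToVec x) k = 0 :=
    inv_mulVec_apply_eq_zero (hrb ▸ det_updateCol_mul_eq_zero h hr hsupp)
  change |_ - ((sparseMatrix S g)⁻¹ *ᵥ b) k| ≤ _
  rw [hx₀, hbase]
  simp

lemma cLin_sparseMatrix_le {g : S → ℝ} {b : Fin n → ℝ} {k : Fin n}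
    (hdet : (sparseMatrix S g).det ≠ 0) (hk : ((sparseMatrix S g).updateCol k b).det ≠ 0) :
    cLin k (sparseMatrix S g) b
      ≤ 2 * ∑ p : S, ∑ l, ‖g p * (cramerMatrix (sparseMatrix S g) b p.1.2 l)⁻¹ p.1.2 p.1.1‖ₑ := by
  set A := sparseMatrix S g with hA
  have hx : (A⁻¹ *ᵥ b) k ≠ 0 := fun h => hk (by
    rw [det_updateCol_eq_det_mul_inv_mulVec hdet.isUnit, h, mul_zero])
  set f : Fin n × Fin n → ℝ≥0∞ := fun q =>
    ‖A⁻¹ k q.1 * A q.1 q.2 * ((A⁻¹ *ᵥ b) q.2 / (A⁻¹ *ᵥ b) k)‖ₑ with hf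
  have hsupp : ∀ q ∉ S, f q = 0 := fun q hq => by
    simp [hf, hA, sparseMatrix_apply_of_notMem g hq]
  calc cLin k A b ≤ ENNReal.ofReal
        (2 * ∑ i, ∑ j, |A⁻¹ k i * A i j * ((A⁻¹ *ᵥ b) j / (A⁻¹ *ᵥ b) k)|) := cLin_le hdet.isUnit hx
    _ = 2 * ∑ q, f q := by
      rw [ENNReal.ofReal_mul zero_le_two, ← Fintype.sum_prod_type',
        ENNReal.ofReal_sum_of_nonneg fun _ _ => abs_nonneg _]
      simp only [hf, Real.enorm_eq_ofReal_abs, ENNReal.ofReal_ofNat]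
    _ = 2 * ∑ p : S, f p := by
      rw [Finset.sum_coe_sort S f, Finset.sum_subset S.subset_univ fun q _ => hsupp q]
    _ ≤ _ := by
      gcongr with p
      rw [← sparseMatrix_apply_coe g p]
      exact enorm_inv_mul_mul_div_le hdet.isUnit hx p.1.1 p.1.2

end SparseMatrix

section RandomSparseMatrix

variable {n : ℕ} {S : Finset (Fin n × Fin n)}

lemma measurable_inv_apply {X m : Type*} [TopologicalSpace X] [MeasurableSpace X]
    [OpensMeasurableSpace X] [Fintype m] [DecidableEq m] {M : X → Matrix m m ℝ}
    (hM : Continuous M) (i j : m) : Measurable fun x => (M x)⁻¹ i j := by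
  simp only [Matrix.inv_def, Matrix.smul_apply, Ring.inverse_eq_inv', smul_eq_mul]
  exact hM.matrix_det.measurable.inv.mul (hM.matrix_adjugate.matrix_elem i j).measurable

lemma measurable_enorm_mul_inv_cramerMatrix (b : Fin n → ℝ) (p : S) (l : Fin n) :
    Measurable fun g =>
      ‖g p * (cramerMatrix (sparseMatrix S g) b p.1.2 l)⁻¹ p.1.2 p.1.1‖ₑ := by
  have hM : Continuous fun g => cramerMatrix (sparseMatrix S g) b p.1.2 l := by
    unfold cramerMatrix
    split_ifs
    · exact continuous_sparseMatrix
    · exact continuous_sparseMatrix.matrix_updateCol l continuous_const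
  exact ((measurable_pi_apply p).mul (measurable_inv_apply hM _ _)).enorm

lemma measurable_sparseMatrix : Measurable (sparseMatrix S) :=
  measurable_pi_lambda _ fun i => measurable_pi_lambda _ fun j =>
    (continuous_sparseMatrix.matrix_elem i j).measurable

variable (μ : S → Measure ℝ) [∀ p, IsProbabilityMeasure (μ p)]

lemma lintegral_enorm_mul_inv_cramerMatrix_rpow_le {s : ℝ} {K : ℝ≥0∞}
    (hK : ∀ p q, ∫⁻ a, ‖a / (a - q)‖ₑ ^ s ∂μ p ≤ K) (hs : 0 ≤ s) (b : Fin n → ℝ) (p : S)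
    (l : Fin n) :
    ∫⁻ g, ‖g p * (cramerMatrix (sparseMatrix S g) b p.1.2 l)⁻¹ p.1.2 p.1.1‖ₑ ^ s ∂Measure.pi μ
      ≤ K := by
  refine lintegral_pi_le_of_forall_lintegral_update_le μ
    ((measurable_enorm_mul_inv_cramerMatrix b p l).pow_const s) p fun g => ?_
  obtain ⟨q, hq⟩ := exists_enorm_mul_inv_setEntry_le
    (cramerMatrix (sparseMatrix S g) b p.1.2 l) p.1.1 p.1.2
  refine (lintegral_mono fun y => ?_).trans (hK p q)
  rw [Function.update_self, sparseMatrix_update, cramerMatrix_setEntry]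
  exact ENNReal.rpow_le_rpow (hq y) hs

variable [∀ p, NullSingletonClass (μ p)]

lemma ae_det_sparseMatrix_ne_zero (hS : Admissible S) :
    ∀ᵐ g ∂Measure.pi μ, (sparseMatrix S g).det ≠ 0 := by
  obtain ⟨B, hB, hdet⟩ := hS
  refine ae_pi_of_forall_ae_update μ
    (isOpen_ne_fun continuous_sparseMatrix.matrix_det continuous_const).measurableSet
    (fun g p hg => ?_) (x₀ := fun p => B p.1.1 p.1.2)
    (by rw [sparseMatrix_restrict hB]; exact hdet.ne_zero)
  simp only [sparseMatrix_update]
  exact ae_det_setEntry_ne_zero _ hg _ _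

lemma ae_det_updateCol_sparseMatrix_ne_zero {b : Fin n → ℝ} {k : Fin n} {g₀ : S → ℝ}
    (hg₀ : ((sparseMatrix S g₀).updateCol k b).det ≠ 0) :
    ∀ᵐ g ∂Measure.pi μ, ((sparseMatrix S g).updateCol k b).det ≠ 0 := by
  refine ae_pi_of_forall_ae_update μ
    (isOpen_ne_fun (continuous_sparseMatrix.matrix_updateCol k continuous_const).matrix_det
      continuous_const).measurableSet (fun g p hg => ?_) hg₀
  simp only [sparseMatrix_update]
  obtain rfl | hk := eq_or_ne k p.1.2
  · simp only [updateCol_setEntry_self]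
    exact .of_forall fun _ => hg
  · simp only [updateCol_setEntry_of_ne _ _ hk]
    exact ae_det_setEntry_ne_zero _ hg _ _

lemma ae_cLinMax_sparseMatrix_le (hS : Admissible S) (b : Fin n → ℝ) :
    ∀ᵐ g ∂Measure.pi μ, cLinMax (sparseMatrix S g) b
      ≤ 2 * ∑ p : S, ∑ l, ‖g p * (cramerMatrix (sparseMatrix S g) b p.1.2 l)⁻¹ p.1.2 p.1.1‖ₑ := by
  simp only [cLinMax, iSup_le_iff]
  refine ae_all_iff.2 fun k => ?_
  by_cases hdeg : ∀ g : S → ℝ, ((sparseMatrix S g).updateCol k b).det = 0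
  · exact .of_forall fun g => (cLin_sparseMatrix_eq_zero hdeg g).trans_le zero_le
  · obtain ⟨g₀, hg₀⟩ := not_forall.1 hdeg
    filter_upwards [ae_det_sparseMatrix_ne_zero μ hS, ae_det_updateCol_sparseMatrix_ne_zero μ hg₀]
      with g hdet hk
    exact cLin_sparseMatrix_le hdet hk

theorem lintegral_cLinMax_sparseMatrix_rpow_le (hS : Admissible S) {s : ℝ} (hs₀ : 0 < s)
    (hs₁ : s ≤ 1) {K : ℝ≥0∞} (hK : ∀ p q, ∫⁻ a, ‖a / (a - q)‖ₑ ^ s ∂μ p ≤ K) (b : Fin n → ℝ) :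
    ∫⁻ g, cLinMax (sparseMatrix S g) b ^ s ∂Measure.pi μ ≤ 2 ^ s * (S.card * (n * K)) := by
  set f : S → Fin n → (S → ℝ) → ℝ≥0∞ := fun p l g =>
    ‖g p * (cramerMatrix (sparseMatrix S g) b p.1.2 l)⁻¹ p.1.2 p.1.1‖ₑ
  have hf : ∀ p l, Measurable fun g => f p l g ^ s := fun p l =>
    (measurable_enorm_mul_inv_cramerMatrix b p l).pow_const s
  calc ∫⁻ g, cLinMax (sparseMatrix S g) b ^ s ∂Measure.pi μ
      ≤ ∫⁻ g, 2 ^ s * ∑ p, ∑ l, f p l g ^ s ∂Measure.pi μ := by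
        refine lintegral_mono_ae ((ae_cLinMax_sparseMatrix_le μ hS b).mono fun g hg => ?_)
        calc _ ≤ (2 * ∑ p, ∑ l, f p l g) ^ s := ENNReal.rpow_le_rpow hg hs₀.le
          _ = 2 ^ s * (∑ p, ∑ l, f p l g) ^ s := ENNReal.mul_rpow_of_nonneg _ _ hs₀.le
          _ ≤ _ := by
            gcongr
            exact (rpow_sum_le_sum_rpow _ _ hs₀ hs₁).trans
              (Finset.sum_le_sum fun p _ => rpow_sum_le_sum_rpow _ _ hs₀ hs₁)
    _ = 2 ^ s * ∑ p, ∑ l, ∫⁻ g, f p l g ^ s ∂Measure.pi μ := by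
        rw [lintegral_const_mul _ (Finset.measurable_fun_sum _ fun p _ =>
            Finset.measurable_fun_sum _ fun l _ => hf p l),
          lintegral_finsetSum _ fun p _ => Finset.measurable_fun_sum _ fun l _ => hf p l]
        simp only [lintegral_finsetSum _ fun l _ => hf _ l]
    _ ≤ 2 ^ s * ∑ _p : S, ∑ _l : Fin n, K := by
        gcongr with p _ l
        exact lintegral_enorm_mul_inv_cramerMatrix_rpow_le μ hK hs₀.le b p l
    _ = 2 ^ s * (S.card * (n * K)) := by simp

end RandomSparseMatrix

section SparseGaussian

variable {n : ℕ} {S : Finset (Fin n × Fin n)} {Abar : Matrix (Fin n) (Fin n) ℝ} {σ : ℝ}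

instance (bbar : Fin n → ℝ) (σ : ℝ) : IsProbabilityMeasure (vecGaussian bbar σ) :=
  have (i : Fin n) : IsProbabilityMeasure (gaussianReal (bbar i) ⟨σ ^ 2, sq_nonneg σ⟩) :=
    instIsProbabilityMeasureGaussianReal _ _
  Measure.pi.instIsProbabilityMeasure _

instance (S : Finset (Fin n × Fin n)) (Abar : Matrix (Fin n) (Fin n) ℝ) (σ : ℝ) :
    IsProbabilityMeasure (sparseGaussian S Abar σ) :=
  have (p : S) : IsProbabilityMeasure (gaussianReal (Abar p.1.1 p.1.2) ⟨σ ^ 2, sq_nonneg σ⟩) :=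
    instIsProbabilityMeasureGaussianReal _ _
  Measure.isProbabilityMeasure_map measurable_sparseMatrix.aemeasurable

lemma lintegral_cLinMax_sparseGaussian_rpow_le (hS : Admissible S)
    (hmax : ∀ i j, (i, j) ∈ S → |Abar i j| ≤ 1) (hσ : 0 < σ) (b : Fin n → ℝ) :
    ∫⁻ A, cLinMax A b ^ (2 / 3 : ℝ) ∂sparseGaussian S Abar σ
      ≤ ENNReal.ofReal (S.card * n * (23 / 15) * (6 * ((1 + σ) / σ)) ^ (2 / 3 : ℝ)) := by
  set v : NNReal := ⟨σ ^ 2, sq_nonneg σ⟩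
  have hv : v ≠ 0 := NNReal.coe_ne_zero.1 (pow_pos hσ 2).ne'
  have hsqrt : √(v : ℝ) = σ := Real.sqrt_sq hσ.le
  have hκ : ∀ p : S, |Abar p.1.1 p.1.2| / √(v : ℝ) + 1 ≤ (1 + σ) / σ := fun p => by
    rw [hsqrt, add_div, div_self hσ.ne']
    gcongr
    exact hmax _ _ p.2
  have := fun p : S => nullSingletonClass_gaussianReal (μ := Abar p.1.1 p.1.2) hv
  calc _ ≤ ∫⁻ g, cLinMax (sparseMatrix S g) b ^ (2 / 3 : ℝ)
        ∂Measure.pi fun p : S => gaussianReal (Abar p.1.1 p.1.2) v := lintegral_map_le _ _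
    _ ≤ 2 ^ (2 / 3 : ℝ) * (S.card * (n *
          ENNReal.ofReal (23 / 15 * (3 * ((1 + σ) / σ)) ^ (2 / 3 : ℝ)))) :=
        lintegral_cLinMax_sparseMatrix_rpow_le _ hS (by norm_num) (by norm_num)
          (fun p q => lintegral_enorm_div_sub_rpow_gaussianReal_le hv (hκ p) q) b
    _ = ENNReal.ofReal (S.card * n * (23 / 15) * (6 * ((1 + σ) / σ)) ^ (2 / 3 : ℝ)) := by
        rw [← ENNReal.ofReal_ofNat 2, ENNReal.ofReal_rpow_of_pos two_pos,
          ← ENNReal.ofReal_natCast S.card, ← ENNReal.ofReal_natCast n,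
          ← ENNReal.ofReal_mul (by positivity), ← ENNReal.ofReal_mul (by positivity),
          ← ENNReal.ofReal_mul (by positivity), show 6 * ((1 + σ) / σ) = 2 * (3 * ((1 + σ) / σ)) by
            ring, Real.mul_rpow two_pos.le (by positivity)]
        congr 1; ring

lemma log_moment_bound_le {N n : ℕ} (hn : 0 < n) (hnN : n ≤ N) {κ : ℝ} (hκ : 0 < κ) :
    Real.log (N * n * (23 / 15) * (6 * κ) ^ (2 / 3 : ℝ)) / (2 / 3)
      ≤ Real.log κ + 2 * Real.log N + Real.log n + 2.65 := by
  have hN : 0 < N := hn.trans_le hnN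
  have hlog : Real.log n ≤ Real.log N := Real.log_le_log (by positivity) (by exact_mod_cast hnN)
  have hlog₁ : Real.log (23 / 15) ≤ 8 / 15 := by
    linarith [Real.log_le_sub_one_of_pos (show (0 : ℝ) < 23 / 15 by norm_num)]
  have hlog₂ : Real.log 6 ≤ 1.83 := by
    have hlog34 := Real.log_le_sub_one_of_pos (show (0 : ℝ) < 3 / 4 by norm_num)
    rw [show (6 : ℝ) = 2 ^ 3 * (3 / 4) by norm_num, Real.log_mul (by norm_num) (by norm_num),
      Real.log_pow]
    push_cast
    linarith [Real.log_two_lt_d9]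
  rw [Real.log_mul (by positivity) (by positivity), Real.log_mul (by positivity) (by positivity),
    Real.log_mul (by positivity) (by positivity), Real.log_rpow (by positivity),
    Real.log_mul (by positivity) (by positivity)]
  linarith

lemma exp_one_le_moment_bound {N n : ℕ} (hn : 0 < n) (hN : 0 < N) {κ : ℝ} (hκ : 1 ≤ κ) :
    Real.exp 1 ≤ N * n * (23 / 15) * (6 * κ) ^ (2 / 3 : ℝ) := by
  have hn' : (1 : ℝ) ≤ n := by exact_mod_cast hn
  have hN' : (1 : ℝ) ≤ N := by exact_mod_cast hN
  have hNn : 1 ≤ (N : ℝ) * n := one_le_mul_of_one_le_of_one_le hN' hn'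
  have hpow : 2 ≤ (6 * κ) ^ (2 / 3 : ℝ) := by
    calc (2 : ℝ) = (8 ^ (1 / 3 : ℝ)) := by
          rw [show (8 : ℝ) = 2 ^ (3 : ℝ) by norm_num, ← Real.rpow_mul two_pos.le]; norm_num
      _ ≤ (6 * κ) ^ (2 / 3 : ℝ) := by
          rw [show (2 / 3 : ℝ) = 2 * (1 / 3) by norm_num, Real.rpow_mul (by positivity),
            Real.rpow_two]
          gcongr
          nlinarith
  calc Real.exp 1 ≤ 1 * (23 / 15) * 2 := by linarith [Real.exp_one_lt_d9]
    _ ≤ N * n * (23 / 15) * (6 * κ) ^ (2 / 3 : ℝ) := by gcongr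

theorem lintegral_log_cLinMax_sparseGaussian_le (hS : Admissible S)
    (hmax : ∀ i j, (i, j) ∈ S → |Abar i j| ≤ 1) (hσ : 0 < σ) (b : Fin n → ℝ) :
    ∫⁻ A, (ENNReal.log (cLinMax A b)).toENNReal ∂sparseGaussian S Abar σ
      ≤ ENNReal.ofReal
        (Real.log ((1 + σ) / σ) + 2 * Real.log S.card + Real.log n + 2.65) := by
  obtain rfl | hn := n.eq_zero_or_pos
  · simp [cLinMax]
  have hκ : 1 ≤ (1 + σ) / σ := by rw [le_div_iff₀ hσ]; linarith
  have hnS := card_le_card_of_admissible hS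
  exact (lintegral_toENNReal_log_le (by norm_num)
    (exp_one_le_moment_bound hn (hn.trans_le hnS) hκ)
    (lintegral_cLinMax_sparseGaussian_rpow_le hS hmax hσ b)).trans
      (ENNReal.ofReal_le_ofReal (log_moment_bound_le hn hnS (by linarith)))

theorem expectation_log_cLinMax_le_general (hS : Admissible S)
    (hmax : ∀ i j, (i, j) ∈ S → |Abar i j| ≤ 1) (ν : Measure (Fin n → ℝ)) [IsProbabilityMeasure ν]
    (hσ : 0 < σ) {β : ℝ} (hβ : 1 < β) :
    ∫ p, Real.log (cLinMax p.1 p.2).toReal / Real.log β ∂(sparseGaussian S Abar σ).prod ν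
      ≤ Real.log ((1 + σ) / σ) / Real.log β + 2 * (Real.log S.card / Real.log β)
          + Real.log n / Real.log β + 2.65 / Real.log β := by
  have hκ : 1 ≤ (1 + σ) / σ := by rw [le_div_iff₀ hσ]; linarith
  set C := Real.log ((1 + σ) / σ) + 2 * Real.log S.card + Real.log n + 2.65 with hC
  have hC₀ : 0 ≤ C := by
    have := Real.log_nonneg hκ
    have := Real.log_natCast_nonneg S.card
    have := Real.log_natCast_nonneg n
    positivity
  have hlog : ∫ p, Real.log (cLinMax p.1 p.2).toReal ∂(sparseGaussian S Abar σ).prod ν ≤ C :=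
    integral_le_of_lintegral_ofReal_le hC₀ <| calc
      _ ≤ ∫⁻ p, (ENNReal.log (cLinMax p.1 p.2)).toENNReal ∂(sparseGaussian S Abar σ).prod ν :=
        lintegral_mono fun p => ofReal_log_toReal_le _
      _ ≤ ∫⁻ b, ∫⁻ A, (ENNReal.log (cLinMax A b)).toENNReal ∂sparseGaussian S Abar σ ∂ν :=
        lintegral_prod_symm_le _
      _ ≤ ∫⁻ _, ENNReal.ofReal C ∂ν :=
        lintegral_mono fun b => lintegral_log_cLinMax_sparseGaussian_le hS hmax hσ b
      _ = ENNReal.ofReal C := by simp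
  rw [integral_div]
  calc _ ≤ C / Real.log β := div_le_div_of_nonneg_right hlog (Real.log_pos hβ).le
    _ = _ := by rw [hC]; ring

end SparseGaussian
/-- Let `S ⊆ [n]²` be admissible, `Ā ∈ M_S`, `b̄ ∈ ℝⁿ` with
`‖Ā‖_max ≤ 1`, `‖b̄‖_∞ ≤ 1`, `σ > 0`, `A ~ N_S(Ā, σ²Id)` and `b ~ N(b̄, σ²Id)`
independent. For every `β > 1`,
`E(log_β(c(A,b))) ≤ log_β((1+σ)/σ) + 2·log_β|S| + log_β n + 2.65/ln β`,
where `c(A,b) = max_k c_k(A,b)`. -/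
theorem expectation_log_cLinMax_le {n : ℕ} (S : Finset (Fin n × Fin n)) (hS : Admissible S)
    (Abar : Matrix (Fin n) (Fin n) ℝ) (hsupp : ∀ i j, (i, j) ∉ S → Abar i j = 0)
    (hmax : ∀ i j, |Abar i j| ≤ 1) (bbar : Fin n → ℝ) (hbmax : ∀ i, |bbar i| ≤ 1)
    (σ : ℝ) (hσ : 0 < σ) (β : ℝ) (hβ : 1 < β) :
    ∫ p, Real.log (cLinMax p.1 p.2).toReal / Real.log β
        ∂((sparseGaussian S Abar σ).prod (vecGaussian bbar σ))
      ≤ Real.log ((1 + σ) / σ) / Real.log β + 2 * (Real.log S.card / Real.log β)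
          + Real.log n / Real.log β + 2.65 / Real.log β :=
  expectation_log_cLinMax_le_general hS (fun i j _ => hmax i j) _ hσ hβ
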